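/- Let R_{abcd} have Riemann symmetries on Minkowski space, n^a a unit timelike vector, and define Y_{ac} = R_{abcd} n^b n^d, Z_{ac} = *R_{abcd} n^b n^d, X_{ac} = *R*_{abcd} n^b n^d, and the Ricci tensor R_{bd} = g^{ae} R_{bade}. Then the orthogonal splitting of the Ricci tensor holds: R_{ac} = Z^{db} ε_{cdb} n_a + n_c Y^d{}_d n_a − X_{ac} − Y_{ac} + n_c Z^{db} ε_{adb} + h_{ac} X^d{}_d. -/

import Mathlib

noncomputable section

/-- The Minkowski metric `diag(-1,1,1,1)` on `ℝ⁴`. -/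
def gm : Fin 4 → Fin 4 → ℝ := fun a b => if a = b then (if a = 0 then -1 else 1) else 0

/-- The totally antisymmetric volume form with `η₀₁₂₃ = 1`. -/
def eta (a b c d : Fin 4) : ℝ :=
  ((((b.val : ℤ) - a.val).sign * ((c.val : ℤ) - a.val).sign * ((d.val : ℤ) - a.val).sign *
    ((c.val : ℤ) - b.val).sign * ((d.val : ℤ) - b.val).sign * ((d.val : ℤ) - c.val).sign : ℤ) : ℝ)

/-- Index lowering: `n_a = g_{ab} n^b`. -/
def lo (n : Fin 4 → ℝ) (a : Fin 4) : ℝ := ∑ b, gm a b * n b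

/-- Spatial metric `h_{ab} = g_{ab} + n_a n_b`. -/
def hm (n : Fin 4 → ℝ) (a b : Fin 4) : ℝ := gm a b + lo n a * lo n b

/-- Spatial volume form `ε_{abc} = n^d η_{dabc}` of a unit timelike `n`. -/
def eps (n : Fin 4 → ℝ) (a b c : Fin 4) : ℝ := ∑ d, n d * eta d a b c

/-- A rank-4 tensor. -/
abbrev Tensor4 := Fin 4 → Fin 4 → Fin 4 → Fin 4 → ℝ

/-- `R_{abcd}` has the symmetries of a Riemann tensor. -/
structure RiemannSymm (R : Tensor4) : Prop where
  antisymm₁ : ∀ a b c d, R a b c d = - R b a c d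
  antisymm₂ : ∀ a b c d, R a b c d = - R a b d c
  pairSymm : ∀ a b c d, R a b c d = R c d a b
  firstBianchi : ∀ a b c d,
    (1/6 : ℝ) * (R a b c d + R b c a d + R c a b d
      - R b a c d - R a c b d - R c b a d) = 0

/-- Left dual `*R_{abcd} = ½ η_{abpq} R^{pq}{}_{cd}`. -/
def dualL (R : Tensor4) (a b c d : Fin 4) : ℝ :=
  (1/2) * ∑ p, ∑ q, eta a b p q * (∑ r, ∑ s, gm p r * gm q s * R r s c d)

/-- Right dual `R*_{abcd} = ½ η_{pqcd} R_{ab}{}^{pq}`. -/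
def dualR (R : Tensor4) (a b c d : Fin 4) : ℝ :=
  (1/2) * ∑ p, ∑ q, eta p q c d * (∑ r, ∑ s, gm p r * gm q s * R a b r s)

/-- Double dual `*R*_{abcd} = ½ η_{ab}{}^{pq} R*_{pqcd}`. -/
def dualLR (R : Tensor4) : Tensor4 := dualL (dualR R)

/-- `Y_{ac} = R_{abcd} n^b n^d`. -/
def Yt (R : Tensor4) (n : Fin 4 → ℝ) (a c : Fin 4) : ℝ := ∑ b, ∑ d, R a b c d * n b * n d

/-- `Z_{ac} = *R_{abcd} n^b n^d`. -/
def Zt (R : Tensor4) (n : Fin 4 → ℝ) (a c : Fin 4) : ℝ := ∑ b, ∑ d, dualL R a b c d * n b * n d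

/-- `X_{ac} = *R*_{abcd} n^b n^d`. -/
def Xt (R : Tensor4) (n : Fin 4 → ℝ) (a c : Fin 4) : ℝ := ∑ b, ∑ d, dualLR R a b c d * n b * n d

/-- The Ricci tensor `R_{bd} = g^{ae} R_{bade}`. -/
def RicciOf (R : Tensor4) (b d : Fin 4) : ℝ := ∑ a, ∑ e, gm a e * R b a d e

/-!
For a unit timelike `n`, the product of two spatial volume forms is the `3 × 3` determinant of the
spatial metric, `ε_{abc} ε_{pqr} = det h`. Up to sign, `X` and `Z` are the contractions of the
curvature with two and one copies of `ε`. Expanding the determinant gives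
`X_{ac} = h_{ac} X^d{}_d - h_a{}^p h_c{}^r h^{qt} R_{pqrt}`. Since
`h^{qt} R_{pqrt} = R_{pr} + Y_{pr}`, this determines the spatial part `h X^d{}_d - X - Y` of the
Ricci tensor. Likewise `Z^{db} ε_{cdb} = -h_c{}^p R_{pr} n^r` gives the mixed part, and `Y^d{}_d` is
the normal component. The splitting is the sum of these parts.
-/

open Matrix

lemma det_fin_three_of {A : Type*} [CommRing A] (a b c d e f g h i : A) :
    det !![a, b, c; d, e, f; g, h, i] =
      a * e * i - a * f * h - b * d * i + b * f * g + c * d * h - c * e * g :=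
  det_fin_three _

lemma det_bordered_neg_one {A : Type*} [CommRing A] {k : ℕ} (u v : Fin k → A)
    (M : Matrix (Fin k) (Fin k) A) :
    det (of (vecCons (vecCons (-1) v) fun i => vecCons (u i) (M i))) =
      -det (M + vecMulVec u v) := by
  have clear_column :
      det (of (vecCons (vecCons (-1) v) fun i => vecCons 0 ((M + vecMulVec u v) i))) =
        det (of (vecCons (vecCons (-1) v) fun i => vecCons (u i) (M i))) := by
    refine det_eq_of_forall_row_eq_smul_add_const (vecCons 0 u) 0 rfl fun i j => ?_
    cases i using Fin.cases <;> cases j using Fin.cases <;> simp [vecMulVec_apply]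
  rw [← clear_column, det_succ_column_zero, Fin.sum_univ_succ]
  simp only [Fin.val_zero, pow_zero, of_apply, cons_val', cons_val_zero, mul_neg, mul_one,
    submatrix, Fin.zero_succAbove, cons_val_succ, neg_mul, one_mul, mul_zero, zero_mul,
    Finset.sum_const_zero, add_zero, neg_inj]
  rfl

section Antisymmetric

variable {ι A : Type*} [Fintype ι] [CommRing A]

lemma sum_swap_mul_of_antisymm {W : ι → ι → A} (hW : ∀ p q, W p q = -W q p) (f : ι → ι → A) :
    ∑ p, ∑ q, f q p * W p q = -∑ p, ∑ q, f p q * W p q := by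
  rw [Finset.sum_comm]
  simp only [← Finset.sum_neg_distrib]
  exact Finset.sum_congr rfl fun p _ => Finset.sum_congr rfl fun q _ => by rw [hW q p, mul_neg]

lemma sum_det_mul_of_antisymm (h : ι → ι → A) {W : ι → ι → ι → ι → A}
    (hW₁ : ∀ p q r t, W p q r t = -W q p r t) (hW₂ : ∀ p q r t, W p q r t = -W p q t r)
    (a c : ι) :
    ∑ p, ∑ q, ∑ r, ∑ t,
      det !![h a c, h a r, h a t; h p c, h p r, h p t; h q c, h q r, h q t] * W p q r t =
      2 * ∑ p, ∑ q, ∑ r, ∑ t, h a c * h p r * h q t * W p q r t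
        - 4 * ∑ p, ∑ q, ∑ r, ∑ t, h a r * h p c * h q t * W p q r t := by
  have swap_right (f : ι → ι → ι → ι → A) : ∑ p, ∑ q, ∑ r, ∑ t, f p q t r * W p q r t =
      -∑ p, ∑ q, ∑ r, ∑ t, f p q r t * W p q r t := by
    simp only [fun p q => sum_swap_mul_of_antisymm (hW₂ p q) (f p q), Finset.sum_neg_distrib]
  have swap_left (f : ι → ι → ι → ι → A) : ∑ p, ∑ q, ∑ r, ∑ t, f q p r t * W p q r t =
      -∑ p, ∑ q, ∑ r, ∑ t, f p q r t * W p q r t := by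
    rw [Finset.sum_comm]
    simp only [← Finset.sum_neg_distrib, ← mul_neg, ← hW₁]
  let F p q r t := h a c * h p r * h q t
  let G p q r t := h a r * h p c * h q t
  have expand p q r t :
      det !![h a c, h a r, h a t; h p c, h p r, h p t; h q c, h q r, h q t] =
        F p q r t - F p q t r - G p q r t + G q p r t + G p q t r - G q p t r := by
    rw [det_fin_three_of]
    ring
  simp only [expand, add_mul, sub_mul, Finset.sum_add_distrib, Finset.sum_sub_distrib]
  rw [swap_left fun p q r t => G p q t r, swap_left G, swap_right F, swap_right G]
  ring

lemma sum_mul_mul_eq_zero_of_antisymm [IsAddTorsionFree A] {W : ι → ι → A}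
    (hW : ∀ p q, W p q = -W q p) (x : ι → A) : ∑ p, ∑ q, x p * x q * W p q = 0 := by
  have h := sum_swap_mul_of_antisymm hW fun p q => x p * x q
  simp only [mul_comm (x _) (x _)] at h ⊢
  exact self_eq_neg.mp h

end Antisymmetric

/-- The diagonal entry `g_{aa} = g^{aa} = ±1` of the Minkowski metric. As the metric is diagonal,
moving the index `a` up or down multiplies a component by `metricSign a`. -/
def metricSign (a : Fin 4) : ℝ := gm a a

lemma metricSign_mul_self (a : Fin 4) : metricSign a * metricSign a = 1 := by
  by_cases ha : a = 0 <;> simp [metricSign, gm, ha]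

lemma gm_apply (a b : Fin 4) : gm a b = if a = b then metricSign a else 0 := by
  by_cases hab : a = b <;> simp [metricSign, gm, hab]

lemma det_gm : det (of gm) = -1 := by
  have diag : of gm = diagonal metricSign := by
    ext a b
    simp [gm_apply, diagonal_apply]
  simp [diag, metricSign, gm]

lemma sum_gm_mul (a : Fin 4) (f : Fin 4 → ℝ) : ∑ b, gm a b * f b = metricSign a * f a := by
  simp [gm_apply]

lemma sum_gm_mul_gm_mul (a b : Fin 4) (f : Fin 4 → Fin 4 → ℝ) :
    ∑ p, ∑ q, gm a p * gm b q * f p q = metricSign a * metricSign b * f a b := by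
  simp_rw [mul_assoc, ← Finset.mul_sum, sum_gm_mul]

lemma lo_eq (n : Fin 4 → ℝ) (a : Fin 4) : lo n a = metricSign a * n a :=
  sum_gm_mul a n

lemma gm_comm (a b : Fin 4) : gm a b = gm b a := by
  grind [gm_apply]

lemma hm_comm (n : Fin 4 → ℝ) (a b : Fin 4) : hm n a b = hm n b a := by
  rw [hm, hm, gm_comm, mul_comm (lo n a)]

lemma eta_swap_left (a b c d : Fin 4) : eta a b c d = -eta b a c d := by
  simp only [eta]
  norm_cast
  revert a b c d
  decide

lemma eta_swap_middle (a b c d : Fin 4) : eta a b c d = -eta a c b d := by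
  simp only [eta]
  norm_cast
  revert a b c d
  decide

lemma eta_swap_pairs (a b c d : Fin 4) : eta a b c d = eta c d a b := by
  simp only [eta]
  norm_cast
  revert a b c d
  decide

lemma eps_swap_left (n : Fin 4 → ℝ) (a b c : Fin 4) : eps n a b c = -eps n b a c := by
  simp only [eps, eta_swap_middle _ a, mul_neg, Finset.sum_neg_distrib]

lemma eta_eq_det (a b c d : Fin 4) :
    eta a b c d = det (of ![Pi.single a 1, Pi.single b 1, Pi.single c 1, Pi.single d 1]) := by
  have key : ∀ a b c d : Fin 4,
      ((b.val : ℤ) - a.val).sign * ((c.val : ℤ) - a.val).sign * ((d.val : ℤ) - a.val).sign *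
        ((c.val : ℤ) - b.val).sign * ((d.val : ℤ) - b.val).sign * ((d.val : ℤ) - c.val).sign =
      det (of ![Pi.single a 1, Pi.single b 1, Pi.single c 1, Pi.single d 1]) := by
    decide +kernel
  rw [eta, key, Int.cast_det]
  congr 1
  ext i j
  fin_cases i <;> simp [Pi.single_apply]

lemma eps_eq_det (n : Fin 4 → ℝ) (a b c : Fin 4) :
    eps n a b c = det (of ![n, Pi.single a 1, Pi.single b 1, Pi.single c 1]) := by
  simp only [eps, eta_eq_det, det_succ_row_zero (of ![_, _, _, _]), Finset.mul_sum]
  rw [Finset.sum_comm]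
  refine Finset.sum_congr rfl fun j _ => ?_
  rw [Finset.sum_eq_single j]
  · simp [submatrix, mul_left_comm, mul_assoc]
  all_goals simp +contextual [Pi.single_apply]

section UnitTimelike

variable {n : Fin 4 → ℝ} (hn : ∑ a, ∑ b, gm a b * n a * n b = -1)
include hn

lemma sum_mul_lo_self : ∑ a, n a * lo n a = -1 := by
  simp only [← hn, lo, Finset.mul_sum]
  exact Finset.sum_congr rfl fun a _ => Finset.sum_congr rfl fun b _ => by ring

-- The Gram matrix has the border `n`, of norm `-1`; clearing it turns `g` into `h = g + n n`.
lemma eps_mul_eps (a b c p q r : Fin 4) :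
    eps n a b c * eps n p q r =
      det !![hm n a p, hm n a q, hm n a r;
             hm n b p, hm n b q, hm n b r;
             hm n c p, hm n c q, hm n c r] := by
  have gram : of ![n, Pi.single a 1, Pi.single b 1, Pi.single c 1] * of gm *
        (of ![n, Pi.single p 1, Pi.single q 1, Pi.single r 1])ᵀ =
      of (vecCons (vecCons (-1) ![lo n p, lo n q, lo n r]) fun i =>
        vecCons (![lo n a, lo n b, lo n c] i)
          (!![gm a p, gm a q, gm a r; gm b p, gm b q, gm b r; gm c p, gm c q, gm c r] i)) := by
    rw [← sum_mul_lo_self hn]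
    ext i j
    fin_cases i <;> fin_cases j <;>
      simp [mul_apply, vecMul, dotProduct, gm_apply, lo_eq, Pi.single_apply, mul_comm]
  have bordered := congrArg det gram
  rw [det_mul, det_mul, det_transpose, det_gm, ← eps_eq_det, ← eps_eq_det,
    det_bordered_neg_one, mul_neg_one, neg_mul, neg_inj] at bordered
  rw [bordered]
  congr 1
  ext i j
  fin_cases i <;> fin_cases j <;> rfl

end UnitTimelike

lemma sum_hm_mul (n : Fin 4 → ℝ) (a : Fin 4) (f : Fin 4 → ℝ) :
    ∑ p, hm n a p * (metricSign p * f p) = f a + lo n a * ∑ p, n p * f p := by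
  calc ∑ p, hm n a p * (metricSign p * f p)
      = ∑ p, gm a p * (metricSign p * f p)
          + lo n a * ∑ p, metricSign p * metricSign p * (n p * f p) := by
        rw [Finset.mul_sum, ← Finset.sum_add_distrib]
        refine Finset.sum_congr rfl fun p _ => ?_
        rw [hm, lo_eq n p]
        ring
    _ = f a + lo n a * ∑ p, n p * f p := by
        rw [sum_gm_mul, ← mul_assoc]
        simp only [metricSign_mul_self, one_mul]

/-- The contraction `h^{pq} M_{pq}` of a 2-tensor with the spatial metric. -/
def spatialTrace (n : Fin 4 → ℝ) (M : Fin 4 → Fin 4 → ℝ) : ℝ :=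
  ∑ p, ∑ q, hm n p q * (metricSign q * (metricSign p * M p q))

lemma spatialTrace_eq (n : Fin 4 → ℝ) (M : Fin 4 → Fin 4 → ℝ) :
    spatialTrace n M = ∑ p, metricSign p * M p p + ∑ p, n p * ∑ q, n q * M p q := by
  simp only [spatialTrace, sum_hm_mul, Finset.sum_add_distrib, lo_eq, Finset.mul_sum]
  congr 1
  refine Finset.sum_congr rfl fun p _ => Finset.sum_congr rfl fun q _ => ?_
  linear_combination n p * n q * M p q * metricSign_mul_self p

/-- The spatial projection `h_a{}^p h_c{}^r M_{pr}` of a 2-tensor. -/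
def spatialProj (n : Fin 4 → ℝ) (M : Fin 4 → Fin 4 → ℝ) (a c : Fin 4) : ℝ :=
  ∑ p, hm n a p * (metricSign p * ∑ r, hm n c r * (metricSign r * M p r))

lemma spatialProj_eq (n : Fin 4 → ℝ) (M : Fin 4 → Fin 4 → ℝ) (a c : Fin 4) :
    spatialProj n M a c =
      M a c + lo n c * ∑ r, n r * M a r + lo n a * ∑ p, n p * M p c
        + lo n a * lo n c * ∑ p, n p * ∑ r, n r * M p r := by
  simp only [spatialProj, sum_hm_mul, mul_add, Finset.sum_add_distrib, mul_left_comm (n _) (lo n c),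
    ← Finset.mul_sum]
  ring

lemma spatialProj_comm (n : Fin 4 → ℝ) {M : Fin 4 → Fin 4 → ℝ} (hM : ∀ p r, M p r = M r p)
    (a c : Fin 4) : spatialProj n M a c = spatialProj n M c a := by
  simp only [spatialProj, Finset.mul_sum]
  rw [Finset.sum_comm]
  congr! 2 with p _ r
  rw [hM r p]
  ring

section UnitTimelike

variable {n : Fin 4 → ℝ} (hn : ∑ a, ∑ b, gm a b * n a * n b = -1)
include hn

lemma sum_mul_hm (c : Fin 4) : ∑ a, n a * hm n a c = 0 := by
  have key : ∑ a, n a * hm n a c = ∑ a, gm c a * n a + (∑ a, n a * lo n a) * lo n c := by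
    rw [Finset.sum_mul, ← Finset.sum_add_distrib]
    exact Finset.sum_congr rfl fun a _ => by rw [hm, gm_comm]; ring
  rw [key, sum_mul_lo_self hn, ← lo]
  ring

lemma sum_hm_mul_hm (a c : Fin 4) :
    ∑ p, metricSign p * (hm n p a * hm n p c) = hm n a c := by
  have h := sum_hm_mul n a fun p => hm n p c
  rw [sum_mul_hm hn, mul_zero, add_zero] at h
  rw [← h]
  exact Finset.sum_congr rfl fun p _ => by rw [hm_comm n p a]; ring

lemma sum_metricSign_mul_hm : ∑ a, metricSign a * hm n a a = 3 := by
  have h : ∀ a, metricSign a * hm n a a = 1 + n a * lo n a := fun a => by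
    rw [hm, lo_eq, ← metricSign]
    linear_combination (1 + metricSign a * n a ^ 2) * metricSign_mul_self a
  simp only [h, Finset.sum_add_distrib, sum_mul_lo_self hn]
  norm_num

lemma sum_metricSign_mul_spatialProj (M : Fin 4 → Fin 4 → ℝ) :
    ∑ a, metricSign a * spatialProj n M a a = spatialTrace n M := by
  simp only [spatialProj, spatialTrace, Finset.mul_sum]
  rw [Finset.sum_comm]
  refine Finset.sum_congr rfl fun p _ => ?_
  rw [Finset.sum_comm]
  refine Finset.sum_congr rfl fun r _ => ?_
  rw [← sum_hm_mul_hm hn, Finset.sum_mul]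
  exact Finset.sum_congr rfl fun a _ => by ring

lemma sum_eps_mul_eps (a b p q : Fin 4) :
    ∑ d, metricSign d * (eps n d a b * eps n d p q) =
      hm n a p * hm n b q - hm n a q * hm n b p := by
  have h : ∀ d, metricSign d * (eps n d a b * eps n d p q) =
      metricSign d * hm n d d * (hm n a p * hm n b q - hm n a q * hm n b p)
        - metricSign d * (hm n d a * hm n d p) * hm n b q
        + metricSign d * (hm n d b * hm n d p) * hm n a q
        + metricSign d * (hm n d a * hm n d q) * hm n b p
        - metricSign d * (hm n d b * hm n d q) * hm n a p := fun d => by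
    rw [eps_mul_eps hn, det_fin_three_of, hm_comm n d a, hm_comm n d b]
    ring
  simp only [h, Finset.sum_add_distrib, Finset.sum_sub_distrib, ← Finset.sum_mul,
    sum_hm_mul_hm hn, sum_metricSign_mul_hm hn]
  ring

end UnitTimelike

lemma sum_dualL_mul (T : Tensor4) (n : Fin 4 → ℝ) (a c d : Fin 4) :
    ∑ b, dualL T a b c d * n b =
      -(1 / 2) * ∑ p, ∑ q, eps n a p q * (metricSign p * metricSign q * T p q c d) := by
  simp only [dualL, sum_gm_mul_gm_mul _ _ fun r s => T r s c d, eps, Finset.mul_sum,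
    Finset.sum_mul]
  rw [Finset.sum_comm]
  refine Finset.sum_congr rfl fun p _ => ?_
  rw [Finset.sum_comm]
  refine Finset.sum_congr rfl fun q _ => Finset.sum_congr rfl fun b _ => ?_
  rw [eta_swap_left b]
  ring

lemma sum_dualR_mul (T : Tensor4) (n : Fin 4 → ℝ) (a b c : Fin 4) :
    ∑ d, dualR T a b c d * n d =
      -(1 / 2) * ∑ r, ∑ t, eps n c r t * (metricSign r * metricSign t * T a b r t) := by
  simp only [dualR, sum_gm_mul_gm_mul _ _ fun r s => T a b r s, eps, Finset.mul_sum,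
    Finset.sum_mul]
  rw [Finset.sum_comm]
  refine Finset.sum_congr rfl fun r _ => ?_
  rw [Finset.sum_comm]
  refine Finset.sum_congr rfl fun t _ => Finset.sum_congr rfl fun d _ => ?_
  rw [eta_swap_left d, eta_swap_pairs c]
  ring

lemma Xt_eq_sum_eps_mul_eps (R : Tensor4) (n : Fin 4 → ℝ) (a c : Fin 4) :
    Xt R n a c = 1 / 4 * ∑ p, ∑ q, ∑ r, ∑ t, eps n a p q * eps n c r t *
      (metricSign p * metricSign q * metricSign r * metricSign t * R p q r t) := by
  calc Xt R n a c = ∑ d, (∑ b, dualL (dualR R) a b c d * n b) * n d := by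
        simp only [Xt, dualLR, Finset.sum_mul]
        exact Finset.sum_comm
    _ = -(1 / 2) * ∑ p, ∑ q, eps n a p q *
          (metricSign p * metricSign q * ∑ d, dualR R p q c d * n d) := by
        simp only [sum_dualL_mul, Finset.mul_sum, Finset.sum_mul]
        rw [Finset.sum_comm]
        refine Finset.sum_congr rfl fun p _ => ?_
        rw [Finset.sum_comm]
        exact Finset.sum_congr rfl fun q _ => Finset.sum_congr rfl fun d _ => by ring
    _ = _ := by
        simp only [sum_dualR_mul, Finset.mul_sum]
        congr! 4 with p _ q _ r _ t
        ring

lemma Zt_eq (R : Tensor4) (n : Fin 4 → ℝ) (a c : Fin 4) :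
    Zt R n a c = -(1 / 2) * ∑ p, ∑ q, eps n a p q *
      (metricSign p * metricSign q * ∑ d, n d * R p q c d) := by
  simp only [Zt]
  rw [Finset.sum_comm]
  simp only [← Finset.sum_mul, sum_dualL_mul]
  simp only [Finset.mul_sum, Finset.sum_mul]
  rw [Finset.sum_comm]
  refine Finset.sum_congr rfl fun p _ => ?_
  rw [Finset.sum_comm]
  exact Finset.sum_congr rfl fun q _ => Finset.sum_congr rfl fun d _ => by ring

/-- The spatial contraction `h^{qt} R_{pqrt}` of a curvature tensor. -/
def spatialRicci (R : Tensor4) (n : Fin 4 → ℝ) (p r : Fin 4) : ℝ :=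
  spatialTrace n fun q t => R p q r t

lemma spatialRicci_eq (R : Tensor4) (n : Fin 4 → ℝ) (p r : Fin 4) :
    spatialRicci R n p r = RicciOf R p r + Yt R n p r := by
  simp only [spatialRicci, spatialTrace_eq, RicciOf, sum_gm_mul, Yt, Finset.mul_sum]
  congr! 3 with q _ t
  ring

lemma RicciOf_comm {R : Tensor4} (hpair : ∀ a b c d, R a b c d = R c d a b) (a c : Fin 4) :
    RicciOf R a c = RicciOf R c a := by
  simp only [RicciOf, sum_gm_mul, hpair a _ c _]

lemma Yt_comm {R : Tensor4} (hpair : ∀ a b c d, R a b c d = R c d a b) (n : Fin 4 → ℝ)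
    (a c : Fin 4) : Yt R n a c = Yt R n c a := by
  simp only [Yt, hpair a _ c _]
  rw [Finset.sum_comm]
  simp only [mul_right_comm]

lemma sum_mul_Yt {R : Tensor4} (hanti₁ : ∀ a b c d, R a b c d = -R b a c d) (n : Fin 4 → ℝ)
    (c : Fin 4) : ∑ a, n a * Yt R n a c = 0 := by
  rw [← sum_mul_mul_eq_zero_of_antisymm (W := fun a b => ∑ d, n d * R a b c d)
    (fun a b => by simp only [hanti₁ a, mul_neg, Finset.sum_neg_distrib]) n]
  simp only [Yt, Finset.mul_sum]
  congr! 3 with a _ b _ d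
  ring

lemma sum_Zt_mul_eps_eq_sum_hm_mul {R : Tensor4}
    (hanti₁ : ∀ a b c d, R a b c d = -R b a c d) {n : Fin 4 → ℝ}
    (hn : ∑ a, ∑ b, gm a b * n a * n b = -1) (c : Fin 4) :
    ∑ d, ∑ b, metricSign d * metricSign b * Zt R n d b * eps n c d b =
      ∑ p, hm n c p * (metricSign p * spatialTrace n (fun b q => ∑ g, n g * R p q b g)) := by
  let V p q b := metricSign p * metricSign q * ∑ g, n g * R p q b g
  have swap (b : Fin 4) : ∑ p, ∑ q, hm n c q * hm n b p * V p q b =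
      -∑ p, ∑ q, hm n c p * hm n b q * V p q b :=
    sum_swap_mul_of_antisymm (fun p q => by
      simp only [V, hanti₁ p q, mul_neg, Finset.sum_neg_distrib, mul_comm (metricSign p)])
      fun p q => hm n c p * hm n b q
  have hZ (d b : Fin 4) : Zt R n d b = -(1 / 2) * ∑ p, ∑ q, eps n d p q * V p q b :=
    Zt_eq R n d b
  calc ∑ d, ∑ b, metricSign d * metricSign b * Zt R n d b * eps n c d b
      = ∑ b, metricSign b / 2 * ∑ p, ∑ q,
          (∑ d, metricSign d * (eps n d c b * eps n d p q)) * V p q b := by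
        simp only [hZ, Finset.mul_sum, Finset.sum_mul]
        rw [Finset.sum_comm]
        refine Finset.sum_congr rfl fun b _ => ?_
        rw [Finset.sum_comm]
        refine Finset.sum_congr rfl fun p _ => ?_
        rw [Finset.sum_comm]
        refine Finset.sum_congr rfl fun q _ => Finset.sum_congr rfl fun d _ => ?_
        rw [eps_swap_left n c]
        ring
    _ = ∑ b, metricSign b * ∑ p, ∑ q, hm n c p * hm n b q * V p q b := by
        simp only [sum_eps_mul_eps hn, sub_mul, Finset.sum_sub_distrib, swap]
        exact Finset.sum_congr rfl fun b _ => by ring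
    _ = _ := by
        simp only [spatialTrace, Finset.mul_sum]
        rw [Finset.sum_comm]
        refine Finset.sum_congr rfl fun p _ => Finset.sum_congr rfl fun b _ =>
          Finset.sum_congr rfl fun q _ => ?_
        simp only [V, Finset.mul_sum]
        exact Finset.sum_congr rfl fun g _ => by ring

section DoubleBivector

variable {R : Tensor4} (hanti₁ : ∀ a b c d, R a b c d = -R b a c d)
  (hanti₂ : ∀ a b c d, R a b c d = -R a b d c)
include hanti₁ hanti₂

lemma sum_metricSign_mul_Yt (n : Fin 4 → ℝ) :
    ∑ a, metricSign a * Yt R n a a = ∑ b, n b * ∑ d, n d * RicciOf R b d := by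
  simp only [Yt, RicciOf, sum_gm_mul, Finset.mul_sum]
  rw [Finset.sum_comm]
  refine Finset.sum_congr rfl fun b _ => ?_
  rw [Finset.sum_comm]
  congr! 2 with d _ a
  rw [hanti₁ a b, hanti₂ b a]
  ring

variable {n : Fin 4 → ℝ} (hn : ∑ a, ∑ b, gm a b * n a * n b = -1)
include hn

lemma Xt_eq_sub_spatialProj (a c : Fin 4) :
    Xt R n a c = 1 / 2 * (hm n a c * spatialTrace n (spatialRicci R n))
      - spatialProj n (spatialRicci R n) c a := by
  have trace : ∑ p, ∑ q, ∑ r, ∑ t, hm n a c * hm n p r * hm n q t *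
      (metricSign p * metricSign q * metricSign r * metricSign t * R p q r t) =
      hm n a c * spatialTrace n (spatialRicci R n) := by
    simp only [spatialRicci, spatialTrace, Finset.mul_sum]
    refine Finset.sum_congr rfl fun p _ => ?_
    rw [Finset.sum_comm]
    congr! 3 with r _ q _ t
    ring
  have proj : ∑ p, ∑ q, ∑ r, ∑ t, hm n a r * hm n p c * hm n q t *
      (metricSign p * metricSign q * metricSign r * metricSign t * R p q r t) =
      spatialProj n (spatialRicci R n) c a := by
    simp only [spatialProj, spatialRicci, spatialTrace, Finset.mul_sum, hm_comm n _ c]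
    refine Finset.sum_congr rfl fun p _ => ?_
    rw [Finset.sum_comm]
    congr! 3 with r _ q _ t
    ring
  rw [Xt_eq_sum_eps_mul_eps]
  simp only [eps_mul_eps hn]
  rw [sum_det_mul_of_antisymm (hm n) (fun p q r t => by rw [hanti₁ p q]; ring)
    (fun p q r t => by rw [hanti₂ p q r]; ring), trace, proj]
  ring

lemma sum_metricSign_mul_Xt :
    ∑ a, metricSign a * Xt R n a a = 1 / 2 * spatialTrace n (spatialRicci R n) := by
  have h (a : Fin 4) : metricSign a * Xt R n a a =
      1 / 2 * spatialTrace n (spatialRicci R n) * (metricSign a * hm n a a)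
        - metricSign a * spatialProj n (spatialRicci R n) a a := by
    rw [Xt_eq_sub_spatialProj hanti₁ hanti₂ hn]
    ring
  simp only [h, Finset.sum_sub_distrib, ← Finset.mul_sum, sum_metricSign_mul_hm hn,
    sum_metricSign_mul_spatialProj hn]
  ring

lemma sum_Zt_mul_eps (c : Fin 4) :
    ∑ d, ∑ b, metricSign d * metricSign b * Zt R n d b * eps n c d b =
      -(∑ r, n r * RicciOf R c r) - lo n c * ∑ p, n p * ∑ r, n r * RicciOf R p r := by
  have trace (p : Fin 4) : spatialTrace n (fun b q => ∑ g, n g * R p q b g) =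
      -∑ r, n r * RicciOf R p r := by
    have normal : ∑ b, n b * ∑ q, n q * ∑ g, n g * R p q b g = 0 := by
      rw [← sum_mul_mul_eq_zero_of_antisymm (W := fun b g => ∑ q, n q * R p q b g)
        (fun b g => by simp only [hanti₂ p _ b, mul_neg, Finset.sum_neg_distrib]) n]
      simp only [Finset.mul_sum]
      refine Finset.sum_congr rfl fun b _ => ?_
      rw [Finset.sum_comm]
      congr! 2 with g _ q
      ring
    rw [spatialTrace_eq, normal, add_zero]
    simp only [RicciOf, sum_gm_mul, Finset.mul_sum,
      ← Finset.sum_neg_distrib]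
    rw [Finset.sum_comm]
    refine Finset.sum_congr rfl fun r _ => Finset.sum_congr rfl fun b _ => ?_
    rw [hanti₂ p b b r]
    ring
  rw [sum_Zt_mul_eps_eq_sum_hm_mul hanti₁ hn, sum_hm_mul]
  simp only [trace, mul_neg, Finset.sum_neg_distrib]
  ring

end DoubleBivector

lemma spatialProj_RicciOf {R : Tensor4} (hanti₁ : ∀ a b c d, R a b c d = -R b a c d)
    (hanti₂ : ∀ a b c d, R a b c d = -R a b d c) (hpair : ∀ a b c d, R a b c d = R c d a b)
    {n : Fin 4 → ℝ} (hn : ∑ a, ∑ b, gm a b * n a * n b = -1) (a c : Fin 4) :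
    spatialProj n (RicciOf R) a c =
      hm n a c * ∑ d, metricSign d * Xt R n d d - Xt R n a c - Yt R n a c := by
  have normal (a : Fin 4) : ∑ r, n r * Yt R n a r = 0 := by
    simp only [Yt_comm hpair n a, sum_mul_Yt hanti₁]
  have proj : spatialProj n (spatialRicci R n) c a =
      spatialProj n (RicciOf R) a c + Yt R n a c := by
    rw [spatialProj_comm n fun p r => by
      rw [spatialRicci_eq, spatialRicci_eq, RicciOf_comm hpair, Yt_comm hpair]]
    simp only [spatialProj_eq, spatialRicci_eq, mul_add, Finset.sum_add_distrib,
      sum_mul_Yt hanti₁, normal, mul_zero, Finset.sum_const_zero]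
    ring
  rw [sum_metricSign_mul_Xt hanti₁ hanti₂ hn, Xt_eq_sub_spatialProj hanti₁ hanti₂ hn, proj]
  ring

theorem ricci_orthogonal_splitting_general
    (R : Tensor4) (hanti : ∀ a b c d, R a b c d = -R b a c d)
    (hpair : ∀ a b c d, R a b c d = R c d a b)
    (n : Fin 4 → ℝ) (hn : (∑ a, ∑ b, gm a b * n a * n b) = -1) (a c : Fin 4) :
    RicciOf R a c =
      (∑ d, ∑ b, ∑ p, ∑ q, gm d p * gm b q * Zt R n p q * eps n c d b) * lo n a
      + lo n c * (∑ d, ∑ e, gm d e * Yt R n e d) * lo n a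
      - Xt R n a c - Yt R n a c
      + lo n c * (∑ d, ∑ b, ∑ p, ∑ q, gm d p * gm b q * Zt R n p q * eps n a d b)
      + hm n a c * (∑ d, ∑ e, gm d e * Xt R n e d) := by
  have hanti₂ : ∀ a b c d, R a b c d = -R a b d c := fun a b c d => by
    rw [hpair, hanti, hpair d c]
  have split := spatialProj_eq n (RicciOf R) a c
  rw [spatialProj_RicciOf hanti hanti₂ hpair hn] at split
  simp only [← Finset.sum_mul, sum_gm_mul_gm_mul, sum_gm_mul, sum_Zt_mul_eps hanti hanti₂ hn,
    sum_metricSign_mul_Yt hanti hanti₂, RicciOf_comm hpair _ c] at split ⊢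
  linear_combination -split

/-- Orthogonal splitting of the Ricci tensor:
`R_{ac} = Z^{db} ε_{cdb} n_a + n_c Y^d{}_d n_a − X_{ac} − Y_{ac} + n_c Z^{db} ε_{adb} + h_{ac} X^d{}_d`. -/
theorem ricci_orthogonal_splitting
    (R : Tensor4) (hR : RiemannSymm R)
    (n : Fin 4 → ℝ) (hn : (∑ a, ∑ b, gm a b * n a * n b) = -1) :
    ∀ a c : Fin 4,
      RicciOf R a c =
        (∑ d, ∑ b, ∑ p, ∑ q, gm d p * gm b q * Zt R n p q * eps n c d b) * lo n a
        + lo n c * (∑ d, ∑ e, gm d e * Yt R n e d) * lo n a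
        - Xt R n a c - Yt R n a c
        + lo n c * (∑ d, ∑ b, ∑ p, ∑ q, gm d p * gm b q * Zt R n p q * eps n a d b)
        + hm n a c * (∑ d, ∑ e, gm d e * Xt R n e d) :=
  ricci_orthogonal_splitting_general R hR.antisymm₁ hR.pairSymm n hn
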